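/- The family (e_{a,i,r}), for a ∈ A and i ∈ I_{≤[r]}, is a Banach basis of C^r(𝒪_F,E): the map c₀(A×I_{≤[r]}) → C^r(𝒪_F,E) sending (b_{a,i}) to Σ_{a∈A} Σ_{i∈I_{≤[r]}} b_{a,i}·e_{a,i,r} is an isomorphism of Banach spaces. -/

import Mathlib

/-!
Setting (cf. the paper's notations): `O` plays the role of the ring of integers `𝒪_F` of a
finite extension `F` of `ℚ_p`, `E` is the coefficient field (a finite extension of `ℚ_p`
with its p-adic absolute value, normalized by `|x| = p^{-val_F(x)}`, `val_F(p) = [F:ℚ_p]`),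
`S` is the (finite) set of `ℚ_p`-algebra embeddings `F ↪ E`, restricted here to `O`,
`ν : O → ℝ` is the absolute value on `O` (the common restriction of the norm of `E` along any
embedding), `ϖ` is a fixed uniformizer with `ν ϖ = q⁻¹` where `q = p^f` is the cardinality
of the residue field, and `u * ϖ ^ e = p` records the ramification index `e`.
-/

open scoped Classical

noncomputable section

namespace CrPaper

structure Setting (S O E : Type*) [Fintype S] [CommRing O] [NormedField E] where
  q : ℝ
  p : ℕ
  fdeg : ℕ
  hp : p.Prime
  hfdeg : 0 < fdeg
  hq : q = (p : ℝ) ^ fdeg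
  emb : S → O →+* E
  emb_inj : ∀ s, Function.Injective (emb s)
  emb_distinct : Function.Injective emb
  ν : O → ℝ
  norm_emb : ∀ (s) (z : O), ‖emb s z‖ = ν z
  norm_le_one : ∀ (s) (z : O), ‖emb s z‖ ≤ 1
  norm_add_max : ∀ x y : E, ‖x + y‖ ≤ max ‖x‖ ‖y‖
  ϖ : O
  ν_ϖ : ν ϖ = q⁻¹
  mem_ball_iff : ∀ (y : O) (n : ℕ), (∃ z, y = ϖ ^ n * z) ↔ ν y ≤ q⁻¹ ^ n
  ram : ∃ (e : ℕ) (u : O), 0 < e ∧ IsUnit u ∧ u * ϖ ^ e = (p : O)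

variable {S O E : Type*} [Fintype S] [DecidableEq S] [CommRing O] [IsDomain O]
  [NormedField E] [CompleteSpace E] [CharZero E]

/-- The total weight `|i| = ∑ i_σ` of a multi-index. -/
def wt (i : S → ℕ) : ℕ := ∑ s, i s

/-- `i! = ∏ i_σ!` for a multi-index. -/
def mfact (i : S → ℕ) : ℕ := ∏ s, (i s).factorial

/-- The (finite) set `I_{≤N}` of multi-indices of total weight `≤ N`. -/
def Idx (S : Type*) [Fintype S] [DecidableEq S] (N : ℕ) : Finset (S → ℕ) :=
  (Fintype.piFinset fun _ : S => Finset.range (N + 1)).filter fun i => wt i ≤ N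

/-- `z^i = ∏_σ σ(z)^{i_σ}`. -/
def mpow (St : Setting S O E) (z : O) (i : S → ℕ) : E := ∏ s, St.emb s z ^ i s

/-- The Taylor remainder `ε_{f,N}(x,y) = f(x+y) − ∑_{|i|≤N} D_i f(x) y^i / i!`. -/
def epsTay (St : Setting S O E) (N : ℕ) (f : O → E) (D : (S → ℕ) → O → E) (x y : O) : E :=
  f (x + y) - ∑ i ∈ Idx S N, D i x * mpow St y i / (mfact i : E)

/-- `f` is of class `C^r` with the family of bounded functions `D` witnessing the
definition: all `D_i` (`|i| ≤ ⌊r⌋`) are bounded and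
`C_{f,r}(h) = sup_{x ∈ O, y ∈ ϖ^h O} |ε_{f,⌊r⌋}(x,y)| q^{rh} → 0` as `h → ∞`. -/
def IsCrWith (St : Setting S O E) (r : ℝ) (f : O → E) (D : (S → ℕ) → O → E) : Prop :=
  (∀ i ∈ Idx S ⌊r⌋₊, ∃ C : ℝ, ∀ x : O, ‖D i x‖ ≤ C) ∧
  ∀ ε : ℝ, 0 < ε → ∃ M : ℕ, ∀ h : ℕ, M ≤ h → ∀ x z : O,
    ‖epsTay St ⌊r⌋₊ f D x (St.ϖ ^ h * z)‖ * St.q ^ (r * (h : ℝ)) ≤ ε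

/-- `f` is of class `C^r`. -/
def IsCr (St : Setting S O E) (r : ℝ) (f : O → E) : Prop :=
  ∃ D, IsCrWith St r f D

/-- The `C^r`-norm of `f` (relative to the — unique — family `D`):
`max( sup_{i,x} |D_i f(x)/i!| , sup_{x,y} |ε_{f,⌊r⌋}(x,y)|/|y|^r )`. -/
def CrNorm (St : Setting S O E) (r : ℝ) (f : O → E) (D : (S → ℕ) → O → E) : ℝ :=
  max (⨆ i : (Idx S ⌊r⌋₊), ⨆ x : O, ‖D i.1 x / (mfact i.1 : E)‖)
      (⨆ x : O, ⨆ y : O, ‖epsTay St ⌊r⌋₊ f D x y‖ / St.ν y ^ r)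

/-- A compatible system of representatives `A_h` of `O/ϖ^h O` with `A_0 = {0}` and
`A_h ⊆ A_{h+1}`. -/
structure RepSystem (St : Setting S O E) where
  A : ℕ → Finset O
  hA0 : A 0 = {0}
  hmono : ∀ h : ℕ, A h ⊆ A (h + 1)
  hrep : ∀ (h : ℕ) (z : O), ∃! a : O, a ∈ A h ∧ ∃ y : O, z = a + St.ϖ ^ h * y

/-- `A = ⋃_h A_h`. -/
def Aall (St : Setting S O E) (R : RepSystem St) : Set O := ⋃ h : ℕ, (R.A h : Set O)

/-- `l(a)`: the smallest `n` with `a ∈ A_n`. -/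
def lA (St : Setting S O E) (R : RepSystem St) (a : O) : ℕ := sInf {n : ℕ | a ∈ R.A n}

/-- The function `z ↦ 1_{a+ϖ^n O}(z) ((z−a)/ϖ^n)^i` : it takes the value `y^i` at
`z = a + ϖ^n y` and `0` outside the coset `a + ϖ^n O`. -/
def coeval (St : Setting S O E) (a : O) (n : ℕ) (i : S → ℕ) : O → E := fun z =>
  if hz : ∃ y : O, z = a + St.ϖ ^ n * y then mpow St hz.choose i else 0

/-- The function `e_{a,i,r}(z) = ρ(ϖ)^{[l(a)r]} 1_{a+ϖ^{l(a)}O}(z) ((z−a)/ϖ^{l(a)})^i`. -/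
def ebasis (St : Setting S O E) (R : RepSystem St) (ρ : O →+* E) (r : ℝ) (a : O)
    (i : S → ℕ) : O → E := fun z =>
  ρ St.ϖ ^ ⌊(lA St R a : ℝ) * r⌋₊ * coeval St a (lA St R a) i z

/-- The `c₀` condition: `b` vanishes at infinity. -/
def c0Fun {ι : Type*} (b : ι → E) : Prop := ∀ ε : ℝ, 0 < ε → {x : ι | ε ≤ ‖b x‖}.Finite

/-!
Work with normalized Taylor coefficients `c_i = D_i f / i!`, called a jet of `f`. Since the
embeddings of `O` into `E` are linearly independent over `E`, so are the functions `z ↦ z ^ i`;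
hence, by rescaling, the coefficients of a polynomial of degree at most `N` are controlled by its
values on `ϖ ^ h O`, uniformly in `h`. In particular jets are unique.

Each `e_{a,i,r}` is polynomial on the cosets of `ϖ ^ l(a)`, and its jet is bounded in the
`C^r`-norm by `q`, so that `c₀`-combinations converge in `C^r`. Evaluated at the points of `A`
these jets are triangular with respect to `l(a)`, which gives injectivity.

For surjectivity, let `f_h` be, on each coset of `ϖ ^ h`, the Taylor polynomial of `f` at the
representative in `A_h`. Then `f_h` tends to `f`, and `f_{h+1} - f_h` is a combination of the
`e_{a,i,r}` with `l(a) = h + 1`. On such a coset it is also the difference of two Taylor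
remainders of `f`, so its coefficients are small by the same control.
-/

/-! ### Linear algebra and multi-index binomials -/

section General

open MvPolynomial in
theorem eq_zero_of_eval_eq_zero_on_addSubmonoid {σ K : Type*} [Field K] [CharZero K]
    {T : AddSubmonoid (σ → K)} (hT : Submodule.span K (T : Set (σ → K)) = ⊤)
    {P : MvPolynomial σ K} (hP : ∀ v ∈ T, eval v P = 0) : P = 0 := by
  refine MvPolynomial.funext fun v => ?_
  obtain ⟨n, c, g, rfl⟩ := Submodule.mem_span_set'.1 (hT ▸ Submodule.mem_top : v ∈ _)
  set Q : MvPolynomial (Fin n) K := bind₁ (fun s => ∑ t, C ((g t : σ → K) s) * X t) P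
  have eval_Q (x : Fin n → K) : eval x Q = eval (∑ t, x t • (g t : σ → K)) P := by
    simp only [Q, ← coe_aeval_eq_eval, RingHom.coe_coe, aeval_bind₁]
    congr 2
    ext s
    simp [mul_comm]
  have hQ : Q = 0 := by
    refine funext_set (fun _ => Set.range ((↑) : ℕ → K))
      (fun _ => Set.infinite_range_of_injective Nat.cast_injective) fun x hx => ?_
    choose m hm using fun t => hx t (Set.mem_univ t)
    have hxT : ∑ t, x t • (g t : σ → K) ∈ T := by
      refine T.sum_mem fun t _ => ?_
      rw [← hm t, Nat.cast_smul_eq_nsmul]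
      exact T.nsmul_mem (g t).2 _
    rw [eval_Q, hP _ hxT, map_zero]
  rw [← eval_Q, hQ, map_zero, map_zero]

theorem exists_norm_coeff_le_of_linearIndependent {ι X 𝕜 : Type*} [Fintype ι] [NormedField 𝕜]
    {g : ι → X → 𝕜} (hg : LinearIndependent 𝕜 g) :
    ∃ K : ℝ, 0 ≤ K ∧ ∀ (c : ι → 𝕜) (M : ℝ),
      (∀ x, ‖∑ i, c i * g i x‖ ≤ M) → ∀ i, ‖c i‖ ≤ K * M := by
  have dual (i : ι) : ∃ m : X →₀ 𝕜, (m.sum fun x t => t • flip g x) = Pi.single i 1 :=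
    Finsupp.mem_span_range_iff_exists_finsupp.1
      (span_flip_eq_top_iff_linearIndependent.2 hg ▸ Submodule.mem_top)
  choose m hm using dual
  refine ⟨∑ i, ∑ x ∈ (m i).support, ‖m i x‖, by positivity, fun c M hM i => ?_⟩
  have hM0 : 0 ≤ M := by
    obtain ⟨x, -⟩ := Function.ne_iff.1 (hg.ne_zero i)
    exact (norm_nonneg _).trans (hM x)
  have coeff_eq : c i = ∑ x ∈ (m i).support, m i x * ∑ k, c k * g k x := by
    calc c i = ∑ k, c k * (Pi.single i 1 : ι → 𝕜) k := by simp [Pi.single_apply]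
      _ = ∑ k, c k * ∑ x ∈ (m i).support, m i x * g k x := by
          simp only [← hm i, Finsupp.sum, Finset.sum_apply, Pi.smul_apply, smul_eq_mul, flip]
      _ = _ := by
          simp_rw [Finset.mul_sum]
          rw [Finset.sum_comm]
          exact Finset.sum_congr rfl fun x _ => Finset.sum_congr rfl fun k _ => by ring
  calc ‖c i‖ ≤ ∑ x ∈ (m i).support, ‖m i x‖ * M := by
        rw [coeff_eq]
        refine norm_sum_le_of_le _ fun x _ => ?_
        rw [norm_mul]
        exact mul_le_mul_of_nonneg_left (hM x) (norm_nonneg _)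
    _ = (∑ x ∈ (m i).support, ‖m i x‖) * M := (Finset.sum_mul ..).symm
    _ ≤ _ := mul_le_mul_of_nonneg_right
        (Finset.single_le_sum (f := fun i => ∑ x ∈ (m i).support, ‖m i x‖)
          (fun _ _ => by positivity) (Finset.mem_univ i)) hM0

/-- The binomial coefficient `∏ₛ (iₛ choose kₛ)` of two multi-indices. -/
def mchoose {σ : Type*} [Fintype σ] (i k : σ → ℕ) : ℕ := ∏ s, (i s).choose (k s)

theorem prod_add_pow {σ A : Type*} [Fintype σ] [DecidableEq σ] [CommSemiring A]
    (u v : σ → A) (i : σ → ℕ) :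
    ∏ s, (u s + v s) ^ i s = ∑ k ∈ Fintype.piFinset fun s => Finset.range (i s + 1),
      (mchoose i k : A) * (∏ s, u s ^ (i - k) s) * ∏ s, v s ^ k s := by
  have expand (s : σ) : (u s + v s) ^ i s =
      ∑ m ∈ Finset.range (i s + 1), ((i s).choose m : A) * u s ^ (i s - m) * v s ^ m := by
    rw [add_comm, add_pow]
    exact Finset.sum_congr rfl fun m _ => by ring
  simp only [expand, Finset.prod_univ_sum, Finset.prod_mul_distrib, mchoose, Nat.cast_prod,
    Pi.sub_apply]

theorem mfact_mul_div_cancel {σ K : Type*} [Fintype σ] [Field K] [CharZero K] (i : σ → ℕ)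
    (a : K) : (mfact i : K) * a / (mfact i : K) = a :=
  mul_div_cancel_left₀ a (Nat.cast_ne_zero.2 (Finset.prod_ne_zero_iff.2
    fun s _ => (i s).factorial_ne_zero))

theorem le_iSup_iSup_of_forall_le {α β : Type*} {g : α → β → ℝ} {B : ℝ} (hB : 0 ≤ B)
    (hg : ∀ a b, g a b ≤ B) (a : α) (b : β) : g a b ≤ ⨆ a, ⨆ b, g a b :=
  le_ciSup_of_le ⟨B, Set.forall_mem_range.2 fun a => Real.iSup_le (hg a) hB⟩ a
    (le_ciSup ⟨B, Set.forall_mem_range.2 (hg a)⟩ b)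

end General

section Setting

variable {S O E : Type*} [Fintype S] [CommRing O] [NormedField E]

theorem Setting.isUltrametricDist (St : Setting S O E) : IsUltrametricDist E :=
  IsUltrametricDist.isUltrametricDist_of_forall_norm_add_le_max_norm St.norm_add_max

variable (St : Setting S O E)

theorem Setting.one_lt_q : 1 < St.q :=
  St.hq ▸ one_lt_pow₀ (mod_cast St.hp.one_lt) St.hfdeg.ne'

theorem Setting.q_pos : 0 < St.q := one_pos.trans St.one_lt_q

theorem Setting.inv_q_pow_pos (n : ℕ) : 0 < St.q⁻¹ ^ n := pow_pos (inv_pos.2 St.q_pos) n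

theorem Setting.antitone_inv_q_pow : Antitone fun n : ℕ => St.q⁻¹ ^ n :=
  pow_right_anti₀ (inv_nonneg.2 St.q_pos.le) (inv_le_one_of_one_le₀ St.one_lt_q.le)

theorem Setting.inv_q_pow_le_one (n : ℕ) : St.q⁻¹ ^ n ≤ 1 := by
  simpa only [pow_zero] using St.antitone_inv_q_pow n.zero_le

theorem Setting.inv_q_pow_rpow (h : ℕ) (r : ℝ) : (St.q⁻¹ ^ h) ^ r = (St.q ^ (r * h))⁻¹ := by
  rw [← Real.rpow_natCast, ← Real.rpow_mul (inv_nonneg.2 St.q_pos.le),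
    Real.inv_rpow St.q_pos.le, mul_comm]

theorem Setting.pow_dvd_iff {y : O} {n : ℕ} : St.ϖ ^ n ∣ y ↔ St.ν y ≤ St.q⁻¹ ^ n :=
  St.mem_ball_iff y n

theorem Setting.ν_le_one (z : O) : St.ν z ≤ 1 := by
  simpa using St.pow_dvd_iff (n := 0).1 (pow_zero St.ϖ ▸ one_dvd z)

theorem Setting.ν_zero (hν : ∀ z, 0 ≤ St.ν z) : St.ν 0 = 0 := by
  have tendsto_zero : Filter.Tendsto (fun n : ℕ => St.q⁻¹ ^ n) Filter.atTop (nhds 0) :=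
    tendsto_pow_atTop_nhds_zero_of_lt_one (inv_nonneg.2 St.q_pos.le)
      (inv_lt_one_of_one_lt₀ St.one_lt_q)
  exact (ge_of_tendsto' tendsto_zero fun n => St.pow_dvd_iff.1 (dvd_zero _)).antisymm (hν 0)

theorem mpow_mul (x y : O) (i : S → ℕ) :
    mpow St (x * y) i = mpow St x i * mpow St y i := by
  simp [mpow, mul_pow, Finset.prod_mul_distrib]

theorem mpow_zero_of_ne_zero {i : S → ℕ} (hi : i ≠ 0) : mpow St 0 i = 0 := by
  obtain ⟨s, hs⟩ := Function.ne_iff.1 hi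
  exact Finset.prod_eq_zero (Finset.mem_univ s) (by simpa using hs)

theorem norm_mpow (z : O) (i : S → ℕ) : ‖mpow St z i‖ = St.ν z ^ wt i := by
  simp [mpow, St.norm_emb, wt, Finset.prod_pow_eq_pow_sum]

theorem norm_mpow_le_one (z : O) (i : S → ℕ) : ‖mpow St z i‖ ≤ 1 := by
  simp only [mpow, norm_prod, norm_pow]
  exact Finset.prod_le_one (fun _ _ => by positivity)
    fun s _ => pow_le_one₀ (norm_nonneg _) (St.norm_le_one s z)

theorem norm_mpow_ϖ_pow (n : ℕ) (i : S → ℕ) :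
    ‖mpow St (St.ϖ ^ n) i‖ = (St.q⁻¹ ^ n) ^ wt i := by
  simp [mpow, St.norm_emb, St.ν_ϖ, wt, Finset.prod_pow_eq_pow_sum]

theorem emb_ϖ_ne_zero (s : S) : St.emb s St.ϖ ≠ 0 := by
  rw [← norm_ne_zero_iff, St.norm_emb, St.ν_ϖ]
  exact inv_ne_zero St.q_pos.ne'

theorem mpow_ϖ_pow_ne_zero (n : ℕ) (i : S → ℕ) : mpow St (St.ϖ ^ n) i ≠ 0 := by
  rw [← norm_ne_zero_iff, norm_mpow_ϖ_pow]
  exact (pow_pos (St.inv_q_pow_pos n) _).ne'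

theorem coeval_add_mul (a : O) (n : ℕ) (i : S → ℕ) (y : O) :
    coeval St a n i (a + St.ϖ ^ n * y) = mpow St y i := by
  have hz : ∃ u : O, a + St.ϖ ^ n * y = a + St.ϖ ^ n * u := ⟨y, rfl⟩
  rw [coeval, dif_pos hz]
  refine Finset.prod_congr rfl fun s _ => ?_
  have emb_eq := congrArg (St.emb s) (add_left_cancel hz.choose_spec)
  simp only [map_mul, map_pow] at emb_eq
  rw [mul_left_cancel₀ (pow_ne_zero n (emb_ϖ_ne_zero St s)) emb_eq]

variable {St} in
theorem coeval_of_not_dvd {a z : O} {n : ℕ} (h : ¬ St.ϖ ^ n ∣ z - a) (i : S → ℕ) :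
    coeval St a n i z = 0 :=
  dif_neg fun ⟨y, hy⟩ => h ⟨y, by rw [hy, add_sub_cancel_left]⟩

variable {St} in
theorem coeval_mul_mpow {a z : O} {n : ℕ} (h : St.ϖ ^ n ∣ z - a) (i : S → ℕ) :
    mpow St (St.ϖ ^ n) i * coeval St a n i z = mpow St (z - a) i := by
  obtain ⟨y, hy⟩ := h
  rw [hy, mpow_mul, ← sub_add_cancel z a, hy, add_comm, coeval_add_mul]

theorem norm_coeval_le_one (a : O) (n : ℕ) (i : S → ℕ) (z : O) : ‖coeval St a n i z‖ ≤ 1 := by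
  rw [coeval]
  split_ifs
  · exact norm_mpow_le_one St _ _
  · simp

end Setting

section MultiIndex

variable {S O E : Type*} [Fintype S] [DecidableEq S] [CommRing O] [NormedField E]

theorem mem_Idx {N : ℕ} {i : S → ℕ} : i ∈ Idx S N ↔ wt i ≤ N := by
  simp only [Idx, Finset.mem_filter, Fintype.mem_piFinset, Finset.mem_range,
    and_iff_right_iff_imp]
  exact fun h s => Nat.lt_succ_of_le ((Finset.single_le_sum (f := i)
    (fun _ _ => Nat.zero_le _) (Finset.mem_univ s)).trans h)

theorem zero_mem_Idx (N : ℕ) : (0 : S → ℕ) ∈ Idx S N := mem_Idx.2 (by simp [wt])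

theorem mpow_add (St : Setting S O E) {N : ℕ} {i : S → ℕ} (hi : i ∈ Idx S N) (u v : O) :
    mpow St (u + v) i =
      ∑ k ∈ Idx S N, (mchoose i k : E) * mpow St u (i - k) * mpow St v k := by
  simp only [mpow, map_add, prod_add_pow]
  refine Finset.sum_subset (fun k hk => mem_Idx.2 (le_trans ?_ (mem_Idx.1 hi))) fun k _ hk => ?_
  · exact Finset.sum_le_sum fun s _ => Finset.mem_range_succ_iff.1 (Fintype.mem_piFinset.1 hk s)
  · obtain ⟨s, hs⟩ : ∃ s, i s < k s := by simpa [Nat.lt_succ_iff] using hk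
    have choose_eq_zero : mchoose i k = 0 :=
      Finset.prod_eq_zero (Finset.mem_univ s) (Nat.choose_eq_zero_of_lt hs)
    simp [choose_eq_zero]

end MultiIndex

section LinearIndependence

variable {S O E : Type*} [Fintype S] [CommRing O] [NormedField E]

theorem span_range_emb (St : Setting S O E) :
    Submodule.span E (Set.range fun (z : O) s => St.emb s z) = ⊤ := by
  have emb_indep : LinearIndependent E fun s => (St.emb s : O → E) :=
    (linearIndependent_monoidHom O E).comp (fun s => (St.emb s : O →* E)) fun s t hst =>
      St.emb_distinct (RingHom.coe_monoidHom_injective hst)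
  exact span_flip_eq_top_iff_linearIndependent.2 emb_indep

open MvPolynomial in
theorem linearIndependent_mpow [CharZero E] (St : Setting S O E) :
    LinearIndependent E fun (i : S → ℕ) (z : O) => mpow St z i := by
  let evalEmb : MvPolynomial S E →ₗ[E] O → E :=
    LinearMap.pi fun z => (aeval fun s => St.emb s z).toLinearMap
  have ker_evalEmb : LinearMap.ker evalEmb = ⊥ := by
    refine LinearMap.ker_eq_bot'.2 fun P hP => ?_
    refine eq_zero_of_eval_eq_zero_on_addSubmonoid
      (T := AddMonoidHom.mrange (AddMonoidHom.pi fun s => (St.emb s : O →+ E)))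
      (by rw [AddMonoidHom.coe_mrange]; exact span_range_emb St) ?_
    rintro _ ⟨z, rfl⟩
    exact congrFun hP z
  have mpow_eq : (fun (i : S → ℕ) (z : O) => mpow St z i) =
      (evalEmb ∘ basisMonomials S E) ∘ Finsupp.equivFunOnFinite.symm := by
    ext i z
    simp [evalEmb, mpow, aeval_monomial, Finsupp.prod_fintype]
  rw [mpow_eq]
  exact ((basisMonomials S E).linearIndependent.map' evalEmb ker_evalEmb).comp _
    Finsupp.equivFunOnFinite.symm.injective

end LinearIndependence

/-! ### Taylor jets -/

section TaylorJet

variable {S O E : Type*} [Fintype S] [DecidableEq S] [CommRing O] [NormedField E]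

theorem exists_norm_coeff_mul_le [CharZero E] (St : Setting S O E) (N : ℕ) :
    ∃ K : ℝ, 0 ≤ K ∧ ∀ (h : ℕ) (c : (S → ℕ) → E) (M : ℝ),
      (∀ y, St.ϖ ^ h ∣ y → ‖∑ k ∈ Idx S N, c k * mpow St y k‖ ≤ M) →
      ∀ k ∈ Idx S N, ‖c k‖ * (St.q⁻¹ ^ h) ^ wt k ≤ K * M := by
  obtain ⟨K, hK, coeff_le⟩ := exists_norm_coeff_le_of_linearIndependent
    ((linearIndependent_mpow St).comp ((↑) : Idx S N → S → ℕ) Subtype.val_injective)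
  refine ⟨K, hK, fun h c M hM k hk => ?_⟩
  have scaled_le (y : O) :
      ‖∑ k : Idx S N, c k * mpow St (St.ϖ ^ h) k * mpow St y k‖ ≤ M := by
    have := hM (St.ϖ ^ h * y) (dvd_mul_right _ _)
    rw [← Finset.sum_coe_sort] at this
    simpa only [mpow_mul, mul_assoc] using this
  simpa only [norm_mul, norm_mpow_ϖ_pow] using coeff_le _ M scaled_le ⟨k, hk⟩

theorem wt_le {r : ℝ} (hr : 0 ≤ r) {k : S → ℕ} (hk : k ∈ Idx S ⌊r⌋₊) : (wt k : ℝ) ≤ r :=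
  (Nat.le_floor_iff hr).1 (mem_Idx.1 hk)

/-- The Taylor remainder of `f` for a family `c` of normalized coefficients; the paper's
`ε_{f,N}` is the case `c_i = D_i f / i!`. -/
def taylorRem (St : Setting S O E) (N : ℕ) (f : O → E) (c : (S → ℕ) → O → E) (x y : O) : E :=
  f (x + y) - ∑ i ∈ Idx S N, c i x * mpow St y i

/-- `c` is a bounded family of normalized Taylor coefficients of order `r` for `f`, that is,
`i! c_i` is the family `D_i f` of the definition of class `C^r`. -/
structure IsTaylorJet (St : Setting S O E) (r : ℝ) (f : O → E) (c : (S → ℕ) → O → E) :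
    Prop where
  exists_norm_le : ∀ i ∈ Idx S ⌊r⌋₊, ∃ C : ℝ, ∀ x, ‖c i x‖ ≤ C
  exists_norm_rem_le : ∀ ε : ℝ, 0 < ε → ∃ M : ℕ, ∀ h, M ≤ h → ∀ x y, St.ϖ ^ h ∣ y →
    ‖taylorRem St ⌊r⌋₊ f c x y‖ ≤ ε * (St.q⁻¹ ^ h) ^ r

/-- `B` bounds every term of the maximum defining the `C^r`-norm of a function with normalized
Taylor coefficients `c`. -/
structure JetBound (St : Setting S O E) (r : ℝ) (f : O → E) (c : (S → ℕ) → O → E) (B : ℝ) :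
    Prop where
  norm_coeff_le : ∀ i ∈ Idx S ⌊r⌋₊, ∀ x, ‖c i x‖ ≤ B
  norm_rem_le : ∀ x y, ‖taylorRem St ⌊r⌋₊ f c x y‖ ≤ B * St.ν y ^ r

variable {St : Setting S O E} {r : ℝ} {f : O → E} {c d D : (S → ℕ) → O → E}

theorem epsTay_eq_taylorRem (N : ℕ) :
    epsTay St N f D = taylorRem St N f fun i x => D i x / (mfact i : E) := by
  ext x y
  simp only [epsTay, taylorRem, div_mul_eq_mul_div]

theorem IsCrWith.isTaylorJet (hf : IsCrWith St r f D) :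
    IsTaylorJet St r f fun i x => D i x / (mfact i : E) where
  exists_norm_le i hi := by
    obtain ⟨C, hC⟩ := hf.1 i hi
    refine ⟨C / ‖(mfact i : E)‖, fun x => ?_⟩
    rw [norm_div]
    exact div_le_div_of_nonneg_right (hC x) (norm_nonneg _)
  exists_norm_rem_le ε hε := by
    obtain ⟨M, hM⟩ := hf.2 ε hε
    refine ⟨M, fun h hh x y ⟨z, hy⟩ => ?_⟩
    rw [← epsTay_eq_taylorRem, St.inv_q_pow_rpow,
      le_mul_inv_iff₀ (Real.rpow_pos_of_pos St.q_pos _), hy]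
    exact hM h hh x z

theorem IsTaylorJet.isCrWith [CharZero E] (hf : IsTaylorJet St r f c) :
    IsCrWith St r f fun i x => (mfact i : E) * c i x := by
  refine ⟨fun i hi => ?_, fun ε hε => ?_⟩
  · obtain ⟨C, hC⟩ := hf.exists_norm_le i hi
    refine ⟨‖(mfact i : E)‖ * C, fun x => ?_⟩
    rw [norm_mul]
    exact mul_le_mul_of_nonneg_left (hC x) (norm_nonneg _)
  · obtain ⟨M, hM⟩ := hf.exists_norm_rem_le ε hε
    refine ⟨M, fun h hh x z => ?_⟩
    rw [epsTay_eq_taylorRem, ← le_mul_inv_iff₀ (Real.rpow_pos_of_pos St.q_pos _),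
      ← St.inv_q_pow_rpow]
    simpa only [mfact_mul_div_cancel] using hM h hh x _ (dvd_mul_right _ z)

theorem IsTaylorJet.unique [CharZero E] (hr : 0 ≤ r) (hc : IsTaylorJet St r f c)
    (hd : IsTaylorJet St r f d) {k : S → ℕ} (hk : k ∈ Idx S ⌊r⌋₊) (x : O) :
    c k x = d k x := by
  obtain ⟨K, hK, coeff_le⟩ := exists_norm_coeff_mul_le St ⌊r⌋₊
  have norm_sub_le (ε : ℝ) (hε : 0 < ε) : ‖c k x - d k x‖ ≤ K * ε := by
    obtain ⟨Mc, hMc⟩ := hc.exists_norm_rem_le ε hε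
    obtain ⟨Md, hMd⟩ := hd.exists_norm_rem_le ε hε
    set h := max Mc Md
    have poly_le (y : O) (hy : St.ϖ ^ h ∣ y) :
        ‖∑ k ∈ Idx S ⌊r⌋₊, (c k x - d k x) * mpow St y k‖ ≤ ε * (St.q⁻¹ ^ h) ^ r := by
      have rem_sub : ∑ k ∈ Idx S ⌊r⌋₊, (c k x - d k x) * mpow St y k =
          taylorRem St ⌊r⌋₊ f d x y + -taylorRem St ⌊r⌋₊ f c x y := by
        simp only [taylorRem, sub_mul, Finset.sum_sub_distrib]
        ring
      rw [rem_sub]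
      refine (St.norm_add_max _ _).trans (max_le (hMd h (le_max_right _ _) x y hy) ?_)
      rw [norm_neg]
      exact hMc h (le_max_left _ _) x y hy
    refine le_of_mul_le_mul_right ?_ (pow_pos (St.inv_q_pow_pos h) (wt k))
    calc ‖c k x - d k x‖ * (St.q⁻¹ ^ h) ^ wt k ≤ K * (ε * (St.q⁻¹ ^ h) ^ r) :=
          coeff_le h _ _ poly_le k hk
      _ ≤ K * (ε * (St.q⁻¹ ^ h) ^ wt k) := by
          gcongr
          rw [← Real.rpow_natCast _ (wt k)]
          exact Real.rpow_le_rpow_of_exponent_ge (St.inv_q_pow_pos h) (St.inv_q_pow_le_one h)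
            (wt_le hr hk)
      _ = K * ε * (St.q⁻¹ ^ h) ^ wt k := (mul_assoc ..).symm
  have norm_le_zero : ‖c k x - d k x‖ ≤ 0 := by
    refine le_of_forall_pos_le_add fun δ hδ => ?_
    calc ‖c k x - d k x‖ ≤ K * (δ / (K + 1)) := norm_sub_le _ (by positivity)
      _ ≤ (K + 1) * (δ / (K + 1)) := by gcongr; linarith
      _ = 0 + δ := by field_simp; ring
  exact sub_eq_zero.1 (norm_le_zero_iff.1 norm_le_zero)

theorem IsTaylorJet.rem_eq_zero (hr : 0 ≤ r) (hc : IsTaylorJet St r f c) (x : O) {y : O}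
    (hy : St.ν y ≤ 0) : taylorRem St ⌊r⌋₊ f c x y = 0 := by
  refine norm_le_zero_iff.1 (le_of_forall_pos_le_add fun ε hε => ?_)
  obtain ⟨M, hM⟩ := hc.exists_norm_rem_le ε hε
  calc ‖taylorRem St ⌊r⌋₊ f c x y‖ ≤ ε * (St.q⁻¹ ^ M) ^ r :=
        hM M le_rfl x y (St.pow_dvd_iff.2 (hy.trans (St.inv_q_pow_pos M).le))
    _ ≤ ε * 1 := by
        gcongr
        exact Real.rpow_le_one (St.inv_q_pow_pos M).le (St.inv_q_pow_le_one M) hr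
    _ = 0 + ε := by ring

theorem IsTaylorJet.apply_eq (hr : 0 ≤ r) (hν : ∀ z, 0 ≤ St.ν z) (hc : IsTaylorJet St r f c)
    (x : O) : f x = c 0 x := by
  have rem_zero := hc.rem_eq_zero hr x (St.ν_zero hν).le
  rw [taylorRem, Finset.sum_eq_single_of_mem 0 (zero_mem_Idx _)
    fun i _ hi => by rw [mpow_zero_of_ne_zero St hi, mul_zero]] at rem_zero
  simpa [mpow, sub_eq_zero] using rem_zero

end TaylorJet

/-! ### Comparison with the `C^r`-norm -/

section CrNorm

variable {S O E : Type*} [Fintype S] [DecidableEq S] [CommRing O] [NormedField E]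
  {St : Setting S O E} {r : ℝ} {f : O → E} {c D : (S → ℕ) → O → E} {B : ℝ}

theorem JetBound.nonneg (h : JetBound St r f c B) : 0 ≤ B :=
  (norm_nonneg _).trans (h.norm_coeff_le 0 (zero_mem_Idx _) 0)

theorem JetBound.crNorm_le [CharZero E] (hν : ∀ z, 0 ≤ St.ν z) (h : JetBound St r f c B) :
    CrNorm St r f (fun i x => (mfact i : E) * c i x) ≤ B := by
  simp only [CrNorm, epsTay_eq_taylorRem, mfact_mul_div_cancel]
  refine max_le ?_ ?_
  · exact Real.iSup_le (fun i => Real.iSup_le (h.norm_coeff_le i i.2) h.nonneg) h.nonneg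
  · exact Real.iSup_le (fun x => Real.iSup_le (fun y =>
      div_le_of_le_mul₀ (Real.rpow_nonneg (hν y) r) h.nonneg (h.norm_rem_le x y)) h.nonneg)
      h.nonneg

theorem norm_taylorRem_le (hB : 0 ≤ B) (hf : ∀ z, ‖f z‖ ≤ B)
    (hc : ∀ i ∈ Idx S ⌊r⌋₊, ∀ x, ‖c i x‖ ≤ B) (x y : O) :
    ‖taylorRem St ⌊r⌋₊ f c x y‖ ≤ B := by
  have := St.isUltrametricDist
  rw [taylorRem, sub_eq_add_neg]
  refine (St.norm_add_max _ _).trans (max_le (hf _) ?_)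
  rw [norm_neg]
  refine IsUltrametricDist.norm_sum_le_of_forall_le_of_nonneg hB fun i hi => ?_
  rw [norm_mul]
  exact (mul_le_of_le_one_right (norm_nonneg _) (norm_mpow_le_one St y i)).trans (hc i hi x)

theorem IsTaylorJet.exists_norm_coeff_le (hf : IsTaylorJet St r f c) :
    ∃ B : ℝ, 0 ≤ B ∧ ∀ i ∈ Idx S ⌊r⌋₊, ∀ x, ‖c i x‖ ≤ B := by
  choose! C hC using hf.exists_norm_le
  refine ⟨∑ i ∈ Idx S ⌊r⌋₊, |C i|, by positivity, fun i hi x => ?_⟩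
  calc ‖c i x‖ ≤ |C i| := (hC i hi x).trans (le_abs_self _)
    _ ≤ _ := Finset.single_le_sum (f := fun i => |C i|) (fun _ _ => abs_nonneg _) hi

theorem IsTaylorJet.exists_norm_taylorRem_le (hr : 0 ≤ r) (hν : ∀ z, 0 ≤ St.ν z)
    (hf : IsTaylorJet St r f c) :
    ∃ C : ℝ, ∀ x y, ‖taylorRem St ⌊r⌋₊ f c x y‖ ≤ C * St.ν y ^ r := by
  obtain ⟨B, hB, coeff_le⟩ := hf.exists_norm_coeff_le
  obtain ⟨M, hM⟩ := hf.exists_norm_rem_le 1 one_pos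
  refine ⟨max (B / (St.q⁻¹ ^ M) ^ r) (St.q ^ r), fun x y => ?_⟩
  have ν_rpow_nonneg : 0 ≤ St.ν y ^ r := Real.rpow_nonneg (hν y) r
  obtain hy | hy := le_or_gt (St.ν y) 0
  · rw [hf.rem_eq_zero hr x hy, norm_zero]
    exact mul_nonneg (le_max_of_le_right (Real.rpow_nonneg St.q_pos.le r)) ν_rpow_nonneg
  obtain ⟨h, hlt, hle⟩ := exists_nat_pow_near_of_lt_one hy (St.ν_le_one y)
    (inv_pos.2 St.q_pos) (inv_lt_one_of_one_lt₀ St.one_lt_q)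
  obtain hMh | hMh := le_or_gt M h
  · calc ‖taylorRem St ⌊r⌋₊ f c x y‖ ≤ 1 * (St.q⁻¹ ^ h) ^ r :=
          hM h hMh x y (St.pow_dvd_iff.2 hle)
      _ ≤ (St.q * St.ν y) ^ r := by
          rw [one_mul]
          refine Real.rpow_le_rpow (St.inv_q_pow_pos h).le ?_ hr
          rw [← inv_mul_le_iff₀ St.q_pos, ← pow_succ']
          exact hlt.le
      _ = St.q ^ r * St.ν y ^ r := Real.mul_rpow St.q_pos.le hy.le
      _ ≤ _ := mul_le_mul_of_nonneg_right (le_max_right _ _) ν_rpow_nonneg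
  · have ν_ge : St.q⁻¹ ^ M ≤ St.ν y := (St.antitone_inv_q_pow hMh).trans hlt.le
    have pow_pos : 0 < (St.q⁻¹ ^ M) ^ r := Real.rpow_pos_of_pos (St.inv_q_pow_pos M) r
    calc ‖taylorRem St ⌊r⌋₊ f c x y‖ ≤ B := norm_taylorRem_le hB
          (fun z => hf.apply_eq hr hν z ▸ coeff_le 0 (zero_mem_Idx _) z) coeff_le x y
      _ = B / (St.q⁻¹ ^ M) ^ r * (St.q⁻¹ ^ M) ^ r := (div_mul_cancel₀ B pow_pos.ne').symm
      _ ≤ B / (St.q⁻¹ ^ M) ^ r * St.ν y ^ r := by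
          gcongr
          exact (St.inv_q_pow_pos M).le
      _ ≤ _ := mul_le_mul_of_nonneg_right (le_max_left _ _) ν_rpow_nonneg

theorem IsCrWith.jetBound_crNorm (hr : 0 ≤ r) (hν : ∀ z, 0 ≤ St.ν z) (hf : IsCrWith St r f D) :
    JetBound St r f (fun i x => D i x / (mfact i : E)) (CrNorm St r f D) := by
  have jet := hf.isTaylorJet
  obtain ⟨B, hB, coeff_le⟩ := jet.exists_norm_coeff_le
  obtain ⟨C, rem_le⟩ := jet.exists_norm_taylorRem_le hr hν
  have norm_coeff_le (i : S → ℕ) (hi : i ∈ Idx S ⌊r⌋₊) (x : O) :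
      ‖D i x / (mfact i : E)‖ ≤ CrNorm St r f D :=
    le_max_of_le_left (le_iSup_iSup_of_forall_le
      (g := fun (i : Idx S ⌊r⌋₊) x => ‖D i.1 x / (mfact i.1 : E)‖) hB
      (fun i => coeff_le i i.2) ⟨i, hi⟩ x)
  refine ⟨norm_coeff_le, fun x y => ?_⟩
  have quotient_le (x y : O) : ‖epsTay St ⌊r⌋₊ f D x y‖ / St.ν y ^ r ≤ max C 0 := by
    rw [epsTay_eq_taylorRem]
    refine div_le_of_le_mul₀ (Real.rpow_nonneg (hν y) r) (le_max_right _ _) ?_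
    exact (rem_le x y).trans
      (mul_le_mul_of_nonneg_right (le_max_left _ _) (Real.rpow_nonneg (hν y) r))
  have quotient_le_crNorm : ‖epsTay St ⌊r⌋₊ f D x y‖ / St.ν y ^ r ≤ CrNorm St r f D :=
    le_max_of_le_right (le_iSup_iSup_of_forall_le (le_max_right C 0) quotient_le x y)
  obtain hy | hy := le_or_gt (St.ν y) 0
  · rw [jet.rem_eq_zero hr x hy, norm_zero]
    exact mul_nonneg ((norm_nonneg _).trans (norm_coeff_le 0 (zero_mem_Idx _) 0))
      (Real.rpow_nonneg (hν y) r)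
  · rw [← epsTay_eq_taylorRem]
    exact (div_le_iff₀ (Real.rpow_pos_of_pos hy r)).1 quotient_le_crNorm

end CrNorm

section VanishingFamilies

variable {ι E : Type*} [NormedField E] {b : ι → E}

theorem c0Fun.tendsto_cofinite (hb : c0Fun b) : Filter.Tendsto b Filter.cofinite (nhds 0) := by
  rw [NormedAddGroup.tendsto_nhds_zero]
  intro ε hε
  simpa only [Filter.eventually_cofinite, not_lt] using hb ε hε

theorem c0Fun.bddAbove (hb : c0Fun b) : BddAbove (Set.range fun j => ‖b j‖) :=
  hb.tendsto_cofinite.norm.bddAbove_range_of_cofinite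

theorem c0Fun.summable_mul [IsUltrametricDist E] [CompleteSpace E] (hb : c0Fun b) {g : ι → E}
    {C : ℝ} (hg : ∀ j, ‖g j‖ ≤ C) : Summable fun j => b j * g j := by
  refine NonarchimedeanAddGroup.summable_of_tendsto_cofinite_zero
    (hb.tendsto_cofinite.zero_mul_isBoundedUnder_le ?_)
  exact Filter.isBoundedUnder_of ⟨C, hg⟩

end VanishingFamilies

section Series

variable {ι S O E : Type*} [Fintype S] [DecidableEq S] [CommRing O] [NormedField E]
  [CompleteSpace E] {St : Setting S O E} {r B : ℝ} {F : ι → O → E} {c : ι → (S → ℕ) → O → E}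
  {b : ι → E}

theorem taylorRem_tsum (hr : 0 ≤ r) (hν : ∀ z, 0 ≤ St.ν z)
    (hF : ∀ j, IsTaylorJet St r (F j) (c j)) (hB : ∀ j, JetBound St r (F j) (c j) B)
    (hb : c0Fun b) (x y : O) :
    taylorRem St ⌊r⌋₊ (fun z => ∑' j, b j * F j z) (fun k z => ∑' j, b j * c j k z) x y =
      ∑' j, b j * taylorRem St ⌊r⌋₊ (F j) (c j) x y := by
  have := St.isUltrametricDist
  have hasSum_coeff {k : S → ℕ} (hk : k ∈ Idx S ⌊r⌋₊) (z : O) :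
      HasSum (fun j => b j * c j k z) (∑' j, b j * c j k z) :=
    (hb.summable_mul fun j => (hB j).norm_coeff_le k hk z).hasSum
  have hasSum_apply (z : O) : HasSum (fun j => b j * F j z) (∑' j, b j * F j z) := by
    simpa only [(hF _).apply_eq hr hν] using hasSum_coeff (zero_mem_Idx _) z
  rw [taylorRem, ← ((hasSum_apply _).sub (hasSum_sum fun k hk =>
    (hasSum_coeff hk x).mul_right (mpow St y k))).tsum_eq]
  simp only [taylorRem, mul_sub, Finset.mul_sum, mul_assoc]

theorem JetBound.tsum (hr : 0 ≤ r) (hν : ∀ z, 0 ≤ St.ν z)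
    (hF : ∀ j, IsTaylorJet St r (F j) (c j)) (hB : ∀ j, JetBound St r (F j) (c j) B)
    (hB0 : 0 ≤ B) (hb : c0Fun b) :
    JetBound St r (fun z => ∑' j, b j * F j z) (fun k z => ∑' j, b j * c j k z)
      (B * ⨆ j, ‖b j‖) := by
  have := St.isUltrametricDist
  have iSup_nonneg : 0 ≤ ⨆ j, ‖b j‖ := Real.iSup_nonneg fun j => norm_nonneg _
  have norm_tsum_le {g : ι → E} {C : ℝ} (hC : 0 ≤ C) (hg : ∀ j, ‖g j‖ ≤ C) :
      ‖∑' j, b j * g j‖ ≤ (⨆ j, ‖b j‖) * C := by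
    refine IsUltrametricDist.norm_tsum_le_of_forall_le_of_nonneg (by positivity) fun j => ?_
    rw [norm_mul]
    exact mul_le_mul (le_ciSup hb.bddAbove j) (hg j) (norm_nonneg _) iSup_nonneg
  rw [mul_comm]
  refine ⟨fun k hk x => norm_tsum_le hB0 fun j => (hB j).norm_coeff_le k hk x, fun x y => ?_⟩
  rw [taylorRem_tsum hr hν hF hB hb, mul_assoc]
  exact norm_tsum_le (mul_nonneg hB0 (Real.rpow_nonneg (hν y) r)) fun j => (hB j).norm_rem_le x y

theorem IsTaylorJet.tsum (hr : 0 ≤ r) (hν : ∀ z, 0 ≤ St.ν z)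
    (hF : ∀ j, IsTaylorJet St r (F j) (c j)) (hB : ∀ j, JetBound St r (F j) (c j) B)
    (hB0 : 0 ≤ B) (hb : c0Fun b) :
    IsTaylorJet St r (fun z => ∑' j, b j * F j z) fun k z => ∑' j, b j * c j k z := by
  refine ⟨fun k hk => ⟨_, (JetBound.tsum hr hν hF hB hB0 hb).norm_coeff_le k hk⟩,
    fun ε hε => ?_⟩
  have := St.isUltrametricDist
  set δ := ε / (B + 1)
  have hδ : 0 < δ := by positivity
  choose M hM using fun j => (hF j).exists_norm_rem_le (ε / (‖b j‖ + 1)) (by positivity)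
  obtain ⟨N, hN⟩ := ((hb δ hδ).image M).bddAbove
  refine ⟨N, fun h hh x y hy => ?_⟩
  have pow_pos : 0 < (St.q⁻¹ ^ h) ^ r := Real.rpow_pos_of_pos (St.inv_q_pow_pos h) r
  rw [taylorRem_tsum hr hν hF hB hb]
  refine IsUltrametricDist.norm_tsum_le_of_forall_le_of_nonneg (by positivity) fun j => ?_
  rw [norm_mul]
  obtain hj | hj := le_or_gt δ ‖b j‖
  · calc ‖b j‖ * ‖taylorRem St ⌊r⌋₊ (F j) (c j) x y‖
        ≤ (‖b j‖ + 1) * (ε / (‖b j‖ + 1) * (St.q⁻¹ ^ h) ^ r) := by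
          gcongr
          · linarith
          · exact hM j h ((hN ⟨j, hj, rfl⟩).trans hh) x y hy
      _ = ε * (St.q⁻¹ ^ h) ^ r := by field_simp
  · calc ‖b j‖ * ‖taylorRem St ⌊r⌋₊ (F j) (c j) x y‖ ≤ δ * ((B + 1) * (St.q⁻¹ ^ h) ^ r) := by
          refine mul_le_mul hj.le (((hB j).norm_rem_le x y).trans ?_) (norm_nonneg _) hδ.le
          gcongr
          · exact Real.rpow_nonneg (hν y) r
          · linarith
          · exact hν y
          · exact St.pow_dvd_iff.1 hy
      _ = ε * (St.q⁻¹ ^ h) ^ r := by simp only [δ]; field_simp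

end Series

/-! ### Taylor jets of the basis functions -/

section UniformizerPowers

variable {S O E : Type*} [Fintype S] [CommRing O] [NormedField E] (St : Setting S O E) {π : E}

theorem norm_pow_floor_eq (hπ : ‖π‖ = St.q⁻¹) (n : ℕ) (r : ℝ) :
    ‖π ^ ⌊(n : ℝ) * r⌋₊‖ = St.q ^ (-(⌊(n : ℝ) * r⌋₊ : ℝ)) := by
  rw [norm_pow, hπ, inv_pow, Real.rpow_neg St.q_pos.le, Real.rpow_natCast]

theorem norm_pow_floor_le (hπ : ‖π‖ = St.q⁻¹) (n : ℕ) (r : ℝ) :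
    ‖π ^ ⌊(n : ℝ) * r⌋₊‖ ≤ St.q * (St.q⁻¹ ^ n) ^ r := by
  rw [norm_pow_floor_eq St hπ, St.inv_q_pow_rpow, ← Real.rpow_neg St.q_pos.le]
  nth_rw 2 [← Real.rpow_one St.q]
  rw [← Real.rpow_add St.q_pos]
  exact Real.rpow_le_rpow_of_exponent_le St.one_lt_q.le
    (by linarith [Nat.lt_floor_add_one ((n : ℝ) * r)])

theorem le_norm_pow_floor (hπ : ‖π‖ = St.q⁻¹) (n : ℕ) {r : ℝ} (hr : 0 ≤ r) :
    (St.q⁻¹ ^ n) ^ r ≤ ‖π ^ ⌊(n : ℝ) * r⌋₊‖ := by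
  rw [norm_pow_floor_eq St hπ, St.inv_q_pow_rpow, ← Real.rpow_neg St.q_pos.le]
  exact Real.rpow_le_rpow_of_exponent_le St.one_lt_q.le
    (by linarith [Nat.floor_le (mul_nonneg n.cast_nonneg hr : 0 ≤ (n : ℝ) * r)])

end UniformizerPowers

section CoevalTaylor

variable {S O E : Type*} [Fintype S] [CommRing O] [NormedField E] (St : Setting S O E)

/-- The normalized Taylor coefficients of the function `coeval St a n i`, which is polynomial on
each coset of `ϖ ^ n`. -/
def coevalTaylor (a : O) (n : ℕ) (i k : S → ℕ) (x : O) : E :=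
  (mchoose i k : E) * coeval St a n (i - k) x / mpow St (St.ϖ ^ n) k

theorem norm_coevalTaylor_le (a : O) (n : ℕ) (i k : S → ℕ) (x : O) :
    ‖coevalTaylor St a n i k x‖ ≤ ((St.q⁻¹ ^ n) ^ wt k)⁻¹ := by
  have := St.isUltrametricDist
  rw [coevalTaylor, norm_div, norm_mpow_ϖ_pow, div_eq_mul_inv, norm_mul]
  exact mul_le_of_le_one_left (inv_nonneg.2 (pow_pos (St.inv_q_pow_pos n) _).le)
    (mul_le_one₀ (IsUltrametricDist.norm_natCast_le_one E _) (norm_nonneg _)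
      (norm_coeval_le_one St a n _ x))

theorem coeval_add_of_dvd [DecidableEq S] {N : ℕ} {i : S → ℕ} (hi : i ∈ Idx S N) (a x : O)
    {n : ℕ} {y : O} (hy : St.ϖ ^ n ∣ y) :
    coeval St a n i (x + y) = ∑ k ∈ Idx S N, coevalTaylor St a n i k x * mpow St y k := by
  by_cases hx : St.ϖ ^ n ∣ x - a
  · obtain ⟨u, hu⟩ := hx
    obtain ⟨w, rfl⟩ := hy
    obtain rfl : x = a + St.ϖ ^ n * u := by rw [← hu, add_sub_cancel]
    rw [add_assoc, ← mul_add, coeval_add_mul, mpow_add St hi]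
    refine Finset.sum_congr rfl fun k _ => ?_
    rw [coevalTaylor, coeval_add_mul, mpow_mul, ← mul_assoc,
      div_mul_cancel₀ _ (mpow_ϖ_pow_ne_zero St n k)]
  · have hxy : ¬ St.ϖ ^ n ∣ x + y - a := by
      rwa [add_sub_right_comm, dvd_add_left hy]
    simp only [coevalTaylor, coeval_of_not_dvd hxy, coeval_of_not_dvd hx, mul_zero, zero_div,
      zero_mul, Finset.sum_const_zero]

end CoevalTaylor

section EbasisTaylor

variable {S O E : Type*} [Fintype S] [CommRing O] [NormedField E] {St : Setting S O E}
  (R : RepSystem St) {ρ : O →+* E} {r : ℝ}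

variable (ρ r) in
/-- The normalized Taylor coefficients of the basis function `e_{a,i,r}`. -/
def ebasisTaylor (a : O) (i k : S → ℕ) (x : O) : E :=
  ρ St.ϖ ^ ⌊(lA St R a : ℝ) * r⌋₊ * coevalTaylor St a (lA St R a) i k x

theorem norm_ebasisTaylor_le (hϖ : ‖ρ St.ϖ‖ = St.q⁻¹) (a : O) (i k : S → ℕ) (x : O) :
    ‖ebasisTaylor R ρ r a i k x‖ ≤ St.q * (St.q⁻¹ ^ lA St R a) ^ (r - wt k) := by
  have hl := St.inv_q_pow_pos (lA St R a)
  rw [ebasisTaylor, norm_mul, Real.rpow_sub hl, Real.rpow_natCast, div_eq_mul_inv, ← mul_assoc]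
  exact mul_le_mul (norm_pow_floor_le St hϖ _ r) (norm_coevalTaylor_le St _ _ _ _ _)
    (norm_nonneg _) (mul_nonneg St.q_pos.le (Real.rpow_nonneg hl.le _))

theorem norm_ebasis_le (hϖ : ‖ρ St.ϖ‖ = St.q⁻¹) (a : O) (i : S → ℕ) (x : O) :
    ‖ebasis St R ρ r a i x‖ ≤ St.q * (St.q⁻¹ ^ lA St R a) ^ r := by
  rw [ebasis, norm_mul]
  exact (mul_le_of_le_one_right (norm_nonneg _) (norm_coeval_le_one St _ _ _ _)).trans
    (norm_pow_floor_le St hϖ _ r)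

variable [DecidableEq S]

theorem taylorRem_ebasis_eq_zero (a x : O) {i : S → ℕ} (hi : i ∈ Idx S ⌊r⌋₊) {y : O}
    (hy : St.ϖ ^ lA St R a ∣ y) :
    taylorRem St ⌊r⌋₊ (ebasis St R ρ r a i) (ebasisTaylor R ρ r a i) x y = 0 := by
  simp only [taylorRem, ebasis, ebasisTaylor, coeval_add_of_dvd St hi a x hy, Finset.mul_sum,
    mul_assoc, sub_self]

theorem norm_taylorRem_ebasis_le (hr : 0 ≤ r) (hϖ : ‖ρ St.ϖ‖ = St.q⁻¹) (hν : ∀ z, 0 ≤ St.ν z)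
    (a x y : O) {i : S → ℕ} (hi : i ∈ Idx S ⌊r⌋₊) :
    ‖taylorRem St ⌊r⌋₊ (ebasis St R ρ r a i) (ebasisTaylor R ρ r a i) x y‖ ≤
      St.q * St.ν y ^ r := by
  have := St.isUltrametricDist
  have bound_nonneg : 0 ≤ St.q * St.ν y ^ r :=
    mul_nonneg St.q_pos.le (Real.rpow_nonneg (hν y) r)
  by_cases hy : St.ϖ ^ lA St R a ∣ y
  · rwa [taylorRem_ebasis_eq_zero R a x hi hy, norm_zero]
  rw [St.pow_dvd_iff, not_le] at hy
  have hl := St.inv_q_pow_pos (lA St R a)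
  have rpow_le {s : ℝ} (hs : 0 ≤ s) :
      St.q * (St.q⁻¹ ^ lA St R a) ^ s ≤ St.q * St.ν y ^ s :=
    mul_le_mul_of_nonneg_left (Real.rpow_le_rpow hl.le hy.le hs) St.q_pos.le
  have term_le (k : S → ℕ) (hk : k ∈ Idx S ⌊r⌋₊) :
      ‖ebasisTaylor R ρ r a i k x * mpow St y k‖ ≤ St.q * St.ν y ^ r := by
    rw [norm_mul, norm_mpow]
    calc ‖ebasisTaylor R ρ r a i k x‖ * St.ν y ^ wt k
        ≤ St.q * St.ν y ^ (r - wt k) * St.ν y ^ wt k :=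
          mul_le_mul_of_nonneg_right ((norm_ebasisTaylor_le R hϖ a i k x).trans
            (rpow_le (sub_nonneg.2 (wt_le hr hk)))) (pow_nonneg (hν y) _)
      _ = St.q * St.ν y ^ r := by
          rw [mul_assoc, ← Real.rpow_natCast, ← Real.rpow_add (hl.trans hy), sub_add_cancel]
  rw [taylorRem, sub_eq_add_neg]
  refine (St.norm_add_max _ _).trans
    (max_le ((norm_ebasis_le R hϖ a i _).trans (rpow_le hr)) ?_)
  rw [norm_neg]
  exact IsUltrametricDist.norm_sum_le_of_forall_le_of_nonneg bound_nonneg term_le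

theorem jetBound_ebasis (hr : 0 ≤ r) (hϖ : ‖ρ St.ϖ‖ = St.q⁻¹) (hν : ∀ z, 0 ≤ St.ν z) (a : O)
    {i : S → ℕ} (hi : i ∈ Idx S ⌊r⌋₊) :
    JetBound St r (ebasis St R ρ r a i) (ebasisTaylor R ρ r a i) St.q where
  norm_coeff_le k hk x := (norm_ebasisTaylor_le R hϖ a i k x).trans <|
    mul_le_of_le_one_right St.q_pos.le <| Real.rpow_le_one (St.inv_q_pow_pos _).le
      (St.inv_q_pow_le_one _) (sub_nonneg.2 (wt_le hr hk))
  norm_rem_le x y := norm_taylorRem_ebasis_le R hr hϖ hν a x y hi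

theorem isTaylorJet_ebasis (hϖ : ‖ρ St.ϖ‖ = St.q⁻¹) (a : O) {i : S → ℕ}
    (hi : i ∈ Idx S ⌊r⌋₊) :
    IsTaylorJet St r (ebasis St R ρ r a i) (ebasisTaylor R ρ r a i) where
  exists_norm_le k _ := ⟨_, norm_ebasisTaylor_le R hϖ a i k⟩
  exists_norm_rem_le ε hε := ⟨lA St R a, fun h hh x y hy => by
    rw [taylorRem_ebasis_eq_zero R a x hi ((pow_dvd_pow _ hh).trans hy), norm_zero]
    exact mul_nonneg hε.le (Real.rpow_nonneg (St.inv_q_pow_pos h).le r)⟩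

end EbasisTaylor

/-! ### Systems of representatives -/

section Representatives

variable {S O E : Type*} [Fintype S] [CommRing O] [NormedField E] {St : Setting S O E}
  (R : RepSystem St)

namespace RepSystem

theorem monotone_A : Monotone R.A := monotone_nat_of_le_succ R.hmono

variable {R} in
theorem eq_of_pow_dvd_sub {n : ℕ} {a a' : O} (ha : a ∈ R.A n) (ha' : a' ∈ R.A n)
    (h : St.ϖ ^ n ∣ a - a') : a = a' := by
  obtain ⟨y, hy⟩ := h
  exact (R.hrep n a).unique ⟨ha, 0, by simp⟩ ⟨ha', y, by rw [← hy, add_sub_cancel]⟩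

/-- The representative in `A_h` of the class of `z` modulo `ϖ ^ h`. -/
def rep (h : ℕ) (z : O) : O := (R.hrep h z).choose

theorem rep_mem (h : ℕ) (z : O) : R.rep h z ∈ R.A h := (R.hrep h z).choose_spec.1.1

theorem pow_dvd_sub_rep (h : ℕ) (z : O) : St.ϖ ^ h ∣ z - R.rep h z := by
  obtain ⟨y, hy⟩ := (R.hrep h z).choose_spec.1.2
  exact ⟨y, sub_eq_of_eq_add' hy⟩

variable {R} in
theorem rep_eq {h : ℕ} {a z : O} (ha : a ∈ R.A h) (hz : St.ϖ ^ h ∣ z - a) : R.rep h z = a :=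
  eq_of_pow_dvd_sub (R.rep_mem h z) ha (by
    simpa only [sub_sub_sub_cancel_left] using dvd_sub hz (R.pow_dvd_sub_rep h z))

theorem rep_rep_succ (h : ℕ) (z : O) : R.rep h (R.rep (h + 1) z) = R.rep h z :=
  rep_eq (R.rep_mem h z) (by
    simpa only [sub_sub_sub_cancel_left] using dvd_sub (R.pow_dvd_sub_rep h z)
      ((pow_dvd_pow _ h.le_succ).trans (R.pow_dvd_sub_rep (h + 1) z)))

end RepSystem

variable {R}

theorem mem_Aall_of_mem_A {a : O} {n : ℕ} (ha : a ∈ R.A n) : a ∈ Aall St R :=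
  Set.mem_iUnion.2 ⟨n, ha⟩

theorem mem_A_iff_lA_le {a : O} (ha : a ∈ Aall St R) {n : ℕ} : a ∈ R.A n ↔ lA St R a ≤ n := by
  have lA_mem : a ∈ R.A (lA St R a) :=
    Nat.sInf_mem (s := {n : ℕ | a ∈ R.A n}) (Set.mem_iUnion.1 ha)
  exact ⟨fun h => Nat.sInf_le h, fun h => R.monotone_A h lA_mem⟩

theorem lA_eq_succ {a : O} {h : ℕ} (ha : a ∈ R.A (h + 1)) (ha' : a ∉ R.A h) :
    lA St R a = h + 1 := by
  have mem_iff (n : ℕ) := mem_A_iff_lA_le (mem_Aall_of_mem_A ha) (n := n)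
  rw [mem_iff] at ha ha'
  lia

end Representatives

/-! ### Injectivity -/

section Injectivity

variable {S O E : Type*} [Fintype S] [CommRing O] [NormedField E] {St : Setting S O E}
  (R : RepSystem St) (ρ : O →+* E) (r : ℝ)

theorem ebasisTaylor_self_eq_zero (a : O) {i k : S → ℕ} (hik : i ≠ k) :
    ebasisTaylor R ρ r a i k a = 0 := by
  have coeval_self : coeval St a (lA St R a) (i - k) a = mpow St 0 (i - k) := by
    simpa using coeval_add_mul St a (lA St R a) (i - k) 0
  rw [ebasisTaylor, coevalTaylor, coeval_self]
  by_cases hle : i ≤ k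
  · obtain ⟨s, hs⟩ := (Pi.lt_def.1 (hle.lt_of_ne hik)).2
    have choose_eq_zero : mchoose i k = 0 :=
      Finset.prod_eq_zero (Finset.mem_univ s) (Nat.choose_eq_zero_of_lt hs)
    simp [choose_eq_zero]
  · have sub_ne_zero : i - k ≠ 0 := fun h => hle (tsub_eq_zero_iff_le.1 h)
    simp [mpow_zero_of_ne_zero St sub_ne_zero]

theorem ebasisTaylor_eq_zero_of_not_dvd {a x : O} (h : ¬ St.ϖ ^ lA St R a ∣ x - a)
    (i k : S → ℕ) : ebasisTaylor R ρ r a i k x = 0 := by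
  simp [ebasisTaylor, coevalTaylor, coeval_of_not_dvd h]

variable {ρ} in
theorem ebasisTaylor_self_ne_zero (hϖ : ‖ρ St.ϖ‖ = St.q⁻¹) (a : O) (k : S → ℕ) :
    ebasisTaylor R ρ r a k k a ≠ 0 := by
  have coeval_self : coeval St a (lA St R a) (k - k) a = mpow St 0 (k - k) := by
    simpa using coeval_add_mul St a (lA St R a) (k - k) 0
  have ρ_ϖ_ne_zero : ρ St.ϖ ≠ 0 := norm_ne_zero_iff.1 (hϖ ▸ inv_ne_zero St.q_pos.ne')
  rw [ebasisTaylor, coevalTaylor, coeval_self]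
  refine mul_ne_zero (pow_ne_zero _ ρ_ϖ_ne_zero) (div_ne_zero ?_ (mpow_ϖ_pow_ne_zero St _ k))
  simp [mchoose, mpow]

variable [DecidableEq S]

/-- The index set `A × I_{≤[r]}` of the family `e_{a,i,r}`. -/
abbrev BasisIndex : Type _ := {x : O × (S → ℕ) // x.1 ∈ Aall St R ∧ x.2 ∈ Idx S ⌊r⌋₊}

variable {R ρ r} {j j' : BasisIndex R r}

theorem ebasisTaylor_eq_zero_of_lA_le (hl : lA St R j.1.1 ≤ lA St R j'.1.1) (hj : j' ≠ j) :
    ebasisTaylor R ρ r j'.1.1 j'.1.2 j.1.2 j.1.1 = 0 := by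
  obtain ⟨⟨a, k⟩, ha, hk⟩ := j
  obtain ⟨⟨a', i⟩, ha', hi⟩ := j'
  by_cases h : St.ϖ ^ lA St R a' ∣ a - a'
  · obtain rfl : a = a' := RepSystem.eq_of_pow_dvd_sub ((mem_A_iff_lA_le ha).2 hl)
      ((mem_A_iff_lA_le ha').2 le_rfl) h
    exact ebasisTaylor_self_eq_zero R ρ r a fun hik => hj (by subst hik; rfl)
  · exact ebasisTaylor_eq_zero_of_not_dvd R ρ r h i k

theorem eq_zero_of_tsum_ebasisTaylor_eq_zero (hϖ : ‖ρ St.ϖ‖ = St.q⁻¹) {b : BasisIndex R r → E}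
    (hb : ∀ j : BasisIndex R r,
      ∑' j', b j' * ebasisTaylor R ρ r j'.1.1 j'.1.2 j.1.2 j.1.1 = 0) : b = 0 := by
  funext j
  induction hn : lA St R j.1.1 using Nat.strong_induction_on generalizing j with
  | _ n ih =>
    have off_diagonal (j' : BasisIndex R r) (hj : j' ≠ j) :
        b j' * ebasisTaylor R ρ r j'.1.1 j'.1.2 j.1.2 j.1.1 = 0 := by
      obtain hl | hl := lt_or_ge (lA St R j'.1.1) n
      · rw [ih _ hl j' rfl, Pi.zero_apply, zero_mul]
      · rw [ebasisTaylor_eq_zero_of_lA_le (hn.trans_le hl) hj, mul_zero]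
    have := hb j
    rw [tsum_eq_single j off_diagonal] at this
    exact (mul_eq_zero.1 this).resolve_right (ebasisTaylor_self_ne_zero R r hϖ _ _)

theorem tsum_ebasis_injective [CompleteSpace E] [CharZero E] (hr : 0 ≤ r)
    (hϖ : ‖ρ St.ϖ‖ = St.q⁻¹) (hν : ∀ z, 0 ≤ St.ν z) {b₁ b₂ : BasisIndex R r → E}
    (h₁ : c0Fun b₁) (h₂ : c0Fun b₂)
    (h : ∀ z, ∑' j, b₁ j * ebasis St R ρ r j.1.1 j.1.2 z =
      ∑' j, b₂ j * ebasis St R ρ r j.1.1 j.1.2 z) : b₁ = b₂ := by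
  have := St.isUltrametricDist
  have jet (j : BasisIndex R r) := isTaylorJet_ebasis R hϖ j.1.1 j.2.2
  have bound (j : BasisIndex R r) := jetBound_ebasis R hr hϖ hν j.1.1 j.2.2
  have summable {b : BasisIndex R r → E} (hb : c0Fun b) (j : BasisIndex R r) :
      Summable fun j' => b j' * ebasisTaylor R ρ r j'.1.1 j'.1.2 j.1.2 j.1.1 :=
    hb.summable_mul fun j' => (bound j').norm_coeff_le _ j.2.2 _
  have jet₁ := IsTaylorJet.tsum hr hν jet bound St.q_pos.le h₁
  rw [funext h] at jet₁
  have jet₂ := IsTaylorJet.tsum hr hν jet bound St.q_pos.le h₂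
  refine sub_eq_zero.1 (eq_zero_of_tsum_ebasisTaylor_eq_zero hϖ fun j => ?_)
  simp only [Pi.sub_apply, sub_mul]
  rw [(summable h₁ j).tsum_sub (summable h₂ j), sub_eq_zero]
  exact jet₁.unique hr jet₂ j.2.2 j.1.1

end Injectivity

/-! ### Surjectivity -/

section BasisCoeff

variable {S O E : Type*} [Fintype S] [DecidableEq S] [CommRing O] [NormedField E]
  {St : Setting S O E} {f : O → E} {c : (S → ℕ) → O → E}

/-- The coefficients, in powers of `z - a`, of the Taylor polynomial at `a` minus the Taylor
polynomial at `a'` attached to the jet `c`. -/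
def jetIncrement (St : Setting S O E) (N : ℕ) (c : (S → ℕ) → O → E) (a' a : O) (k : S → ℕ) : E :=
  c k a - ∑ i ∈ Idx S N, c i a' * ((mchoose i k : E) * mpow St (a - a') (i - k))

theorem sum_jetIncrement_mul_mpow (N : ℕ) (a' a y : O) :
    ∑ k ∈ Idx S N, jetIncrement St N c a' a k * mpow St y k =
      ∑ k ∈ Idx S N, c k a * mpow St y k - ∑ i ∈ Idx S N, c i a' * mpow St (a - a' + y) i := by
  simp only [jetIncrement, sub_mul, Finset.sum_sub_distrib, Finset.sum_mul]
  rw [Finset.sum_comm (s := Idx S N)]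
  congr 1
  refine Finset.sum_congr rfl fun i hi => ?_
  simp only [mpow_add St hi, Finset.mul_sum, mul_assoc]

theorem sum_jetIncrement_eq_taylorRem_sub (N : ℕ) (a' a y : O) :
    ∑ k ∈ Idx S N, jetIncrement St N c a' a k * mpow St y k =
      taylorRem St N f c a' (a - a' + y) - taylorRem St N f c a y := by
  rw [sum_jetIncrement_mul_mpow, taylorRem, taylorRem, ← add_assoc, add_sub_cancel]
  ring

variable (R : RepSystem St)

/-- The jet at `a` which the basis functions centred at `a` have to contribute: what is missing
from the Taylor polynomial at the representative of `a` one level below. -/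
def levelJet (N : ℕ) (c : (S → ℕ) → O → E) (a : O) (k : S → ℕ) : E :=
  if lA St R a = 0 then c k a else jetIncrement St N c (R.rep (lA St R a - 1) a) a k

variable (ρ : O →+* E) (r : ℝ)

/-- The coefficient of `e_{a,k,r}` in the expansion of a function with jet `c`. -/
def basisCoeff (c : (S → ℕ) → O → E) (a : O) (k : S → ℕ) : E :=
  levelJet R ⌊r⌋₊ c a k * mpow St (St.ϖ ^ lA St R a) k / ρ St.ϖ ^ ⌊(lA St R a : ℝ) * r⌋₊

variable {R ρ r}

theorem sum_basisCoeff_mul_ebasis_of_dvd (hϖ : ‖ρ St.ϖ‖ = St.q⁻¹) {a z : O}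
    (hz : St.ϖ ^ lA St R a ∣ z - a) :
    ∑ k ∈ Idx S ⌊r⌋₊, basisCoeff R ρ r c a k * ebasis St R ρ r a k z =
      ∑ k ∈ Idx S ⌊r⌋₊, levelJet R ⌊r⌋₊ c a k * mpow St (z - a) k := by
  have ρ_ϖ_ne_zero : ρ St.ϖ ≠ 0 := norm_ne_zero_iff.1 (hϖ ▸ inv_ne_zero St.q_pos.ne')
  refine Finset.sum_congr rfl fun k _ => ?_
  rw [basisCoeff, ebasis, ← mul_assoc, div_mul_cancel₀ _ (pow_ne_zero _ ρ_ϖ_ne_zero), mul_assoc,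
    coeval_mul_mpow hz]

theorem sum_basisCoeff_mul_ebasis_of_not_dvd {a z : O} (hz : ¬ St.ϖ ^ lA St R a ∣ z - a) :
    ∑ k ∈ Idx S ⌊r⌋₊, basisCoeff R ρ r c a k * ebasis St R ρ r a k z = 0 :=
  Finset.sum_eq_zero fun k _ => by rw [ebasis, coeval_of_not_dvd hz, mul_zero, mul_zero]

variable (R) in
/-- The piecewise polynomial approximation at level `h` of a function with jet `c`: on each coset
of `ϖ ^ h`, the Taylor polynomial at its representative. -/
def taylorApprox (N : ℕ) (c : (S → ℕ) → O → E) (h : ℕ) (z : O) : E :=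
  ∑ k ∈ Idx S N, c k (R.rep h z) * mpow St (z - R.rep h z) k

theorem sub_taylorApprox_eq_taylorRem (N h : ℕ) (z : O) :
    f z - taylorApprox R N c h z = taylorRem St N f c (R.rep h z) (z - R.rep h z) := by
  rw [taylorRem, add_sub_cancel, taylorApprox]

theorem sum_levelJet_mul_mpow {h : ℕ} {z : O} (hz : R.rep (h + 1) z ∉ R.A h) (N : ℕ) :
    ∑ k ∈ Idx S N, levelJet R N c (R.rep (h + 1) z) k * mpow St (z - R.rep (h + 1) z) k =
      taylorApprox R N c (h + 1) z - taylorApprox R N c h z := by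
  simp only [levelJet, lA_eq_succ (R.rep_mem (h + 1) z) hz, h.succ_ne_zero, if_false,
    Nat.add_sub_cancel, R.rep_rep_succ, sum_jetIncrement_mul_mpow, taylorApprox]
  simp only [add_comm, sub_add_sub_cancel]

theorem sum_sdiff_basisCoeff_mul_ebasis (hϖ : ‖ρ St.ϖ‖ = St.q⁻¹) (h : ℕ) (z : O) :
    ∑ a ∈ R.A (h + 1) \ R.A h, ∑ k ∈ Idx S ⌊r⌋₊, basisCoeff R ρ r c a k * ebasis St R ρ r a k z =
      taylorApprox R ⌊r⌋₊ c (h + 1) z - taylorApprox R ⌊r⌋₊ c h z := by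
  have eq_zero_of_ne (a : O) (ha : a ∈ R.A (h + 1) \ R.A h) (hne : a ≠ R.rep (h + 1) z) :
      ∑ k ∈ Idx S ⌊r⌋₊, basisCoeff R ρ r c a k * ebasis St R ρ r a k z = 0 := by
    obtain ⟨ha, ha'⟩ := Finset.mem_sdiff.1 ha
    refine sum_basisCoeff_mul_ebasis_of_not_dvd fun hz => hne ?_
    rw [lA_eq_succ ha ha'] at hz
    exact (RepSystem.rep_eq ha hz).symm
  by_cases hz : R.rep (h + 1) z ∈ R.A h
  · have rep_eq : R.rep (h + 1) z = R.rep h z := 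
      (RepSystem.rep_eq hz (by simp)).symm.trans (R.rep_rep_succ h z)
    rw [taylorApprox, taylorApprox, rep_eq, sub_self]
    exact Finset.sum_eq_zero fun a ha => eq_zero_of_ne a ha
      (ne_of_mem_of_not_mem hz (Finset.mem_sdiff.1 ha).2).symm
  · rw [← sum_levelJet_mul_mpow hz, Finset.sum_eq_single_of_mem _
      (Finset.mem_sdiff.2 ⟨R.rep_mem _ _, hz⟩) eq_zero_of_ne]
    refine sum_basisCoeff_mul_ebasis_of_dvd hϖ ?_
    rw [lA_eq_succ (R.rep_mem _ _) hz]
    exact R.pow_dvd_sub_rep _ _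

theorem sum_basisCoeff_mul_ebasis (hϖ : ‖ρ St.ϖ‖ = St.q⁻¹) (h : ℕ) (z : O) :
    ∑ a ∈ R.A h, ∑ k ∈ Idx S ⌊r⌋₊, basisCoeff R ρ r c a k * ebasis St R ρ r a k z =
      taylorApprox R ⌊r⌋₊ c h z := by
  induction h with
  | zero =>
    have rep_zero : R.rep 0 z = 0 := by simpa [R.hA0] using R.rep_mem 0 z
    have lA_zero : lA St R 0 = 0 := by
      have zero_mem : (0 : O) ∈ R.A 0 := by simp [R.hA0]
      exact Nat.le_zero.1 ((mem_A_iff_lA_le (mem_Aall_of_mem_A zero_mem)).1 zero_mem)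
    rw [R.hA0, Finset.sum_singleton, sum_basisCoeff_mul_ebasis_of_dvd hϖ (by simp [lA_zero])]
    simp only [levelJet, lA_zero, if_true, taylorApprox, rep_zero]
  | succ h ih =>
    rw [← Finset.sum_sdiff (R.hmono h), ih, sum_sdiff_basisCoeff_mul_ebasis hϖ, sub_add_cancel]

theorem IsTaylorJet.tendsto_taylorApprox (hr : 0 ≤ r) (hf : IsTaylorJet St r f c) (z : O) :
    Filter.Tendsto (fun h => taylorApprox R ⌊r⌋₊ c h z) Filter.atTop (nhds (f z)) := by
  refine Metric.tendsto_atTop'.2 fun ε hε => ?_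
  obtain ⟨M, hM⟩ := hf.exists_norm_rem_le (ε / 2) (half_pos hε)
  refine ⟨M, fun h hh => ?_⟩
  rw [dist_comm, dist_eq_norm, sub_taylorApprox_eq_taylorRem]
  calc ‖taylorRem St ⌊r⌋₊ f c (R.rep h z) (z - R.rep h z)‖ ≤ ε / 2 * (St.q⁻¹ ^ h) ^ r :=
        hM h hh.le _ _ (R.pow_dvd_sub_rep h z)
    _ ≤ ε / 2 := mul_le_of_le_one_right (half_pos hε).le
        (Real.rpow_le_one (St.inv_q_pow_pos h).le (St.inv_q_pow_le_one h) hr)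
    _ < ε := half_lt_self hε

theorem norm_sum_levelJet_mul_mpow_le {a : O} {h : ℕ} (ha : lA St R a = h + 1) {N : ℕ} {M : ℝ}
    (hM : ∀ x y, St.ϖ ^ h ∣ y → ‖taylorRem St N f c x y‖ ≤ M) {y : O} (hy : St.ϖ ^ h ∣ y) :
    ‖∑ k ∈ Idx S N, levelJet R N c a k * mpow St y k‖ ≤ M := by
  simp only [levelJet, ha, h.succ_ne_zero, if_false, Nat.add_sub_cancel,
    sum_jetIncrement_eq_taylorRem_sub (f := f), sub_eq_add_neg (taylorRem _ _ _ _ _ _)]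
  refine (St.norm_add_max _ _).trans
    (max_le (hM _ _ (dvd_add (R.pow_dvd_sub_rep h a) hy)) ?_)
  rw [norm_neg]
  exact hM _ _ hy

variable (R) in
theorem exists_norm_basisCoeff_le [CharZero E] (hr : 0 ≤ r) (hϖ : ‖ρ St.ϖ‖ = St.q⁻¹) :
    ∃ K : ℝ, 0 ≤ K ∧ ∀ (f : O → E) (c : (S → ℕ) → O → E) (a : O) (h : ℕ) (B : ℝ),
      lA St R a = h + 1 →
      (∀ x y, St.ϖ ^ h ∣ y → ‖taylorRem St ⌊r⌋₊ f c x y‖ ≤ B * (St.q⁻¹ ^ h) ^ r) →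
      ∀ k ∈ Idx S ⌊r⌋₊, ‖basisCoeff R ρ r c a k‖ ≤ K * B := by
  obtain ⟨K, hK, coeff_le⟩ := exists_norm_coeff_mul_le St ⌊r⌋₊
  refine ⟨K * St.q ^ r, mul_nonneg hK (Real.rpow_nonneg St.q_pos.le r),
    fun f c a h B ha hB k hk => ?_⟩
  have denom_pos := Real.rpow_pos_of_pos (St.inv_q_pow_pos (h + 1)) r
  have denom_eq : (St.q⁻¹ ^ h) ^ r = St.q ^ r * (St.q⁻¹ ^ (h + 1)) ^ r := by
    rw [← Real.mul_rpow St.q_pos.le (St.inv_q_pow_pos _).le, pow_succ',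
      mul_inv_cancel_left₀ St.q_pos.ne']
  have le_denom := le_norm_pow_floor St hϖ (h + 1) hr
  have levelJet_le : ‖levelJet R ⌊r⌋₊ c a k‖ * (St.q⁻¹ ^ h) ^ wt k ≤
      K * (B * (St.q⁻¹ ^ h) ^ r) :=
    coeff_le h _ _ (fun y hy => norm_sum_levelJet_mul_mpow_le ha hB hy) k hk
  rw [basisCoeff, ha, norm_div, norm_mul, norm_mpow_ϖ_pow]
  calc ‖levelJet R ⌊r⌋₊ c a k‖ * (St.q⁻¹ ^ (h + 1)) ^ wt k / ‖ρ St.ϖ ^ ⌊((h + 1 : ℕ) : ℝ) * r⌋₊‖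
      ≤ ‖levelJet R ⌊r⌋₊ c a k‖ * (St.q⁻¹ ^ h) ^ wt k / (St.q⁻¹ ^ (h + 1)) ^ r := by
        refine div_le_div₀ (mul_nonneg (norm_nonneg _)
          (pow_nonneg (St.inv_q_pow_pos h).le _)) ?_ denom_pos le_denom
        exact mul_le_mul_of_nonneg_left (pow_le_pow_left₀ (St.inv_q_pow_pos (h + 1)).le
          (St.antitone_inv_q_pow h.le_succ) _) (norm_nonneg _)
    _ ≤ K * (B * (St.q⁻¹ ^ h) ^ r) / (St.q⁻¹ ^ (h + 1)) ^ r := by gcongr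
    _ = K * St.q ^ r * B := by
        rw [denom_eq, div_eq_iff denom_pos.ne']
        ring

theorem basisCoeff_of_lA_eq_zero {a : O} (ha : lA St R a = 0) (k : S → ℕ) :
    basisCoeff R ρ r c a k = c k a := by
  simp [basisCoeff, levelJet, ha, mpow]

end BasisCoeff

section Expansion

variable {S O E : Type*} [Fintype S] [DecidableEq S] [CommRing O] [NormedField E]
  {St : Setting S O E} (R : RepSystem St) {ρ : O →+* E} {r : ℝ} {f : O → E}
  {c : (S → ℕ) → O → E}

variable (r) in
/-- The indices `(a, i)` with `a ∈ A_h`. -/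
def basisIndexUpTo (h : ℕ) : Finset (BasisIndex R r) :=
  (R.A h ×ˢ Idx S ⌊r⌋₊).subtype _

variable {R}

theorem mem_basisIndexUpTo {h : ℕ} {j : BasisIndex R r} :
    j ∈ basisIndexUpTo R r h ↔ lA St R j.1.1 ≤ h := by
  simp [basisIndexUpTo, j.2.2, mem_A_iff_lA_le j.2.1]

theorem sum_basisIndexUpTo (g : O → (S → ℕ) → E) (h : ℕ) :
    ∑ j ∈ basisIndexUpTo R r h, g j.1.1 j.1.2 = ∑ a ∈ R.A h, ∑ k ∈ Idx S ⌊r⌋₊, g a k := by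
  rw [← Finset.sum_product']
  refine Finset.sum_subtype_of_mem (fun x : O × (S → ℕ) => g x.1 x.2) fun x hx => ?_
  obtain ⟨ha, hk⟩ := Finset.mem_product.1 hx
  exact ⟨mem_Aall_of_mem_A ha, hk⟩

variable (R r) in
theorem tendsto_basisIndexUpTo : Filter.Tendsto (basisIndexUpTo R r) Filter.atTop Filter.atTop :=
  Filter.tendsto_atTop_finset_of_monotone
    (fun _ _ hmn _ hj => mem_basisIndexUpTo.2 ((mem_basisIndexUpTo.1 hj).trans hmn))
    fun _ => ⟨_, mem_basisIndexUpTo.2 le_rfl⟩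

theorem IsTaylorJet.c0Fun_basisCoeff [CharZero E] (hr : 0 ≤ r) (hϖ : ‖ρ St.ϖ‖ = St.q⁻¹)
    (hf : IsTaylorJet St r f c) :
    c0Fun fun j : BasisIndex R r => basisCoeff R ρ r c j.1.1 j.1.2 := by
  intro ε hε
  obtain ⟨K, hK, coeff_le⟩ := exists_norm_basisCoeff_le R hr hϖ
  obtain ⟨M, hM⟩ := hf.exists_norm_rem_le (ε / (K + 1)) (by positivity)
  refine (basisIndexUpTo R r M).finite_toSet.subset fun j (hj : ε ≤ _) =>
    mem_basisIndexUpTo.2 (not_lt.1 fun hlt => hj.not_gt ?_)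
  have hl : lA St R j.1.1 = (lA St R j.1.1 - 1) + 1 := by lia
  calc ‖basisCoeff R ρ r c j.1.1 j.1.2‖ ≤ K * (ε / (K + 1)) :=
        coeff_le f c _ _ _ hl (hM _ (by lia)) _ j.2.2
    _ < (K + 1) * (ε / (K + 1)) := by gcongr; linarith
    _ = ε := by field_simp

theorem IsTaylorJet.eq_tsum_basisCoeff_mul_ebasis [CompleteSpace E] [CharZero E] (hr : 0 ≤ r)
    (hϖ : ‖ρ St.ϖ‖ = St.q⁻¹) (hf : IsTaylorJet St r f c) (z : O) :
    f z = ∑' j : BasisIndex R r,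
      basisCoeff R ρ r c j.1.1 j.1.2 * ebasis St R ρ r j.1.1 j.1.2 z := by
  have := St.isUltrametricDist
  have ebasis_le (j : BasisIndex R r) : ‖ebasis St R ρ r j.1.1 j.1.2 z‖ ≤ St.q :=
    (norm_ebasis_le R hϖ _ _ z).trans <| mul_le_of_le_one_right St.q_pos.le <|
      Real.rpow_le_one (St.inv_q_pow_pos _).le (St.inv_q_pow_le_one _) hr
  have partial_sums_tendsto :=
    ((hf.c0Fun_basisCoeff hr hϖ).summable_mul ebasis_le).hasSum.comp (tendsto_basisIndexUpTo R r)
  refine tendsto_nhds_unique (hf.tendsto_taylorApprox (R := R) hr z)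
    (partial_sums_tendsto.congr fun h => ?_)
  rw [← sum_basisCoeff_mul_ebasis hϖ]
  exact sum_basisIndexUpTo (fun a k => basisCoeff R ρ r c a k * ebasis St R ρ r a k z) h

variable (R) in
theorem exists_basisCoeff_iSup_le [CharZero E] (hr : 0 ≤ r) (hϖ : ‖ρ St.ϖ‖ = St.q⁻¹)
    (hν : ∀ z, 0 ≤ St.ν z) :
    ∃ K : ℝ, 0 ≤ K ∧ ∀ (f : O → E) (c : (S → ℕ) → O → E) (B : ℝ), JetBound St r f c B →
      ⨆ j : BasisIndex R r, ‖basisCoeff R ρ r c j.1.1 j.1.2‖ ≤ K * B := by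
  obtain ⟨K, -, coeff_le⟩ := exists_norm_basisCoeff_le R hr hϖ
  refine ⟨max 1 K, le_max_of_le_left one_pos.le, fun f c B hB => ?_⟩
  have hB0 := hB.nonneg
  refine Real.iSup_le (fun j => ?_) (by positivity)
  obtain hl | ⟨h, hl⟩ : lA St R j.1.1 = 0 ∨ ∃ h, lA St R j.1.1 = h + 1 := by
    cases lA St R j.1.1 <;> simp
  · rw [basisCoeff_of_lA_eq_zero hl]
    exact (hB.norm_coeff_le _ j.2.2 _).trans (le_mul_of_one_le_left hB0 (le_max_left _ _))
  · refine (coeff_le f c _ h B hl (fun x y hy => ?_) _ j.2.2).trans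
      (mul_le_mul_of_nonneg_right (le_max_right _ _) hB0)
    exact (hB.norm_rem_le x y).trans (mul_le_mul_of_nonneg_left
      (Real.rpow_le_rpow (hν y) (St.pow_dvd_iff.1 hy) hr) hB0)

end Expansion

/-- the family `(e_{a,i,r})_{a ∈ A, i ∈ I_{≤[r]}}` is a Banach basis of
`C^r(O,E)`: the map `c₀(A × I_{≤[r]}) → C^r(O,E)`, `(b_{a,i}) ↦ ∑ b_{a,i} e_{a,i,r}`, is an
isomorphism of Banach spaces (well defined and bounded, bijective onto `C^r(O,E)`, with
bounded inverse). -/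
theorem statement14 (St : Setting S O E) (R : RepSystem St) (ρ : O →+* E)
    (hρ : ∀ z : O, ‖ρ z‖ = St.ν z) (r : ℝ) (hr : 0 ≤ r) :
    ∃ C₁ C₂ : ℝ, 0 ≤ C₁ ∧ 0 ≤ C₂ ∧
      (∀ b : {x : O × (S → ℕ) // x.1 ∈ Aall St R ∧ x.2 ∈ Idx S ⌊r⌋₊} → E, c0Fun b →
        ∃ D, IsCrWith St r (fun z => ∑' x, b x * ebasis St R ρ r x.1.1 x.1.2 z) D ∧
          CrNorm St r (fun z => ∑' x, b x * ebasis St R ρ r x.1.1 x.1.2 z) D ≤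
            C₁ * ⨆ x, ‖b x‖) ∧
      (∀ (f : O → E) (D : (S → ℕ) → O → E), IsCrWith St r f D →
        ∃ b : {x : O × (S → ℕ) // x.1 ∈ Aall St R ∧ x.2 ∈ Idx S ⌊r⌋₊} → E, c0Fun b ∧
          (∀ z : O, f z = ∑' x, b x * ebasis St R ρ r x.1.1 x.1.2 z) ∧
          (⨆ x, ‖b x‖) ≤ C₂ * CrNorm St r f D) ∧
      (∀ b₁ b₂ : {x : O × (S → ℕ) // x.1 ∈ Aall St R ∧ x.2 ∈ Idx S ⌊r⌋₊} → E,
        c0Fun b₁ → c0Fun b₂ →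
        (∀ z : O, (∑' x, b₁ x * ebasis St R ρ r x.1.1 x.1.2 z) =
          ∑' x, b₂ x * ebasis St R ρ r x.1.1 x.1.2 z) →
        b₁ = b₂) := by
  have hϖ : ‖ρ St.ϖ‖ = St.q⁻¹ := (hρ _).trans St.ν_ϖ
  have hν (z : O) : 0 ≤ St.ν z := hρ z ▸ norm_nonneg _
  have ebasis_isTaylorJet (j : BasisIndex R r) := isTaylorJet_ebasis R hϖ j.1.1 j.2.2
  have ebasis_jetBound (j : BasisIndex R r) := jetBound_ebasis R hr hϖ hν j.1.1 j.2.2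
  obtain ⟨K, hK, coeff_le⟩ := exists_basisCoeff_iSup_le R hr hϖ hν
  refine ⟨St.q, K, St.q_pos.le, hK, fun b hb => ?expand, fun f D hf => ?decompose,
    fun b₁ b₂ h₁ h₂ h => tsum_ebasis_injective hr hϖ hν h₁ h₂ h⟩
  case expand =>
    have jet := IsTaylorJet.tsum hr hν ebasis_isTaylorJet ebasis_jetBound St.q_pos.le hb
    have bound := JetBound.tsum hr hν ebasis_isTaylorJet ebasis_jetBound St.q_pos.le hb
    exact ⟨_, jet.isCrWith, bound.crNorm_le hν⟩
  case decompose =>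
    exact ⟨_, hf.isTaylorJet.c0Fun_basisCoeff hr hϖ,
      hf.isTaylorJet.eq_tsum_basisCoeff_mul_ebasis hr hϖ,
      coeff_le f _ _ (hf.jetBound_crNorm hr hν)⟩

end CrPaper
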